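/- Let (V,E,Ψ) be a strongly connected planar box-like self-affine GIFS with positive weights (p_e) and graph-directed measure family (μ_v)_{v∈V}. Then for every s∈ℝ and q≥0 the limit P(s,q)=lim_{k→∞}‖A_k^{s,q}‖^{1/k} exists. Moreover, for each fixed q≥0 the function s↦P(s,q) is strictly decreasing on ℝ, and there exists a unique s∈ℝ with P(s,q)=1. -/

import Mathlib

open MeasureTheory Filter Set
open scoped Classical

noncomputable section

namespace LqGIFS

/-! ### Mesh cubes, moment sums, L^q spectra, box dimension -/

/-- Closed cube of the `δ`-mesh of `ℝ`. -/
def meshCube1 (δ : ℝ) (k : ℤ) : Set ℝ := Set.Icc ((k : ℝ) * δ) (((k : ℝ) + 1) * δ)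

/-- Closed cube of the `δ`-mesh of `ℝ²`. -/
def meshCube2 (δ : ℝ) (k : ℤ × ℤ) : Set (ℝ × ℝ) :=
  (Set.Icc ((k.1 : ℝ) * δ) (((k.1 : ℝ) + 1) * δ)) ×ˢ
    (Set.Icc ((k.2 : ℝ) * δ) (((k.2 : ℝ) + 1) * δ))

/-- The moment sum `D_δ^q(ν)` for a measure on `ℝ` (cubes of zero measure are omitted,
so that at `q = 0` this counts the mesh cubes of positive measure). -/
def Dq1 (ν : Measure ℝ) (δ q : ℝ) : ℝ :=
  ∑' k : ℤ, if ν (meshCube1 δ k) = 0 then 0 else (ν (meshCube1 δ k)).toReal ^ q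

/-- The moment sum `D_δ^q(ν)` for a measure on `ℝ²`. -/
def Dq2 (ν : Measure (ℝ × ℝ)) (δ q : ℝ) : ℝ :=
  ∑' k : ℤ × ℤ, if ν (meshCube2 δ k) = 0 then 0 else (ν (meshCube2 δ k)).toReal ^ q

/-- The `L^q`-spectrum of a measure on `ℝ` exists and equals `s` (i.e. upper and lower
`L^q`-spectra coincide and equal `s`). -/
def HasLq1 (ν : Measure ℝ) (q s : ℝ) : Prop :=
  Tendsto (fun δ : ℝ => Real.log (Dq1 ν δ q) / (-Real.log δ))
    (nhdsWithin 0 (Set.Ioi 0)) (nhds s)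

/-- The `L^q`-spectrum of a measure on `ℝ²` exists and equals `s`. -/
def HasLq2 (ν : Measure (ℝ × ℝ)) (q s : ℝ) : Prop :=
  Tendsto (fun δ : ℝ => Real.log (Dq2 ν δ q) / (-Real.log δ))
    (nhdsWithin 0 (Set.Ioi 0)) (nhds s)

/-- Number of closed `δ`-mesh cubes of `ℝ²` meeting `X`. -/
def boxCount (X : Set (ℝ × ℝ)) (δ : ℝ) : ℕ :=
  Set.ncard {k : ℤ × ℤ | (X ∩ meshCube2 δ k).Nonempty}

/-- The box dimension of `X` exists and equals `d`. -/
def HasBoxDim (X : Set (ℝ × ℝ)) (d : ℝ) : Prop :=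
  Tendsto (fun δ : ℝ => Real.log (boxCount X δ) / (-Real.log δ))
    (nhdsWithin 0 (Set.Ioi 0)) (nhds d)

/-! ### Matrices: 1-norm, spectral radius, permutation matrices -/

/-- The 1-norm `‖A‖ = ∑_{i,j} |a_{ij}|` of a square matrix. -/
def mnorm {ι : Type*} [Fintype ι] (A : Matrix ι ι ℝ) : ℝ := ∑ i, ∑ j, |A i j|

/-- The spectral radius of a square real matrix, via the Gelfand formula. -/
def specRad {ι : Type*} [Fintype ι] [DecidableEq ι] (A : Matrix ι ι ℝ) : ℝ :=
  Filter.limsup (fun k : ℕ => (mnorm (A ^ k)) ^ ((k : ℝ)⁻¹)) Filter.atTop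

/-- A square 0-1 matrix with exactly one 1 in each row and each column. -/
def IsPermMatrix {ι : Type*} (Z : Matrix ι ι ℝ) : Prop :=
  (∀ i j, Z i j = 0 ∨ Z i j = 1) ∧ (∀ i, ∃! j, Z i j = 1) ∧ (∀ j, ∃! i, Z i j = 1)

/-! ### Directed graphs -/

/-- Strong connectivity of the finite directed graph with edge set `E`,
initial vertex map `ini` and terminal vertex map `ter`. -/
def GraphSC {V E : Type*} (ini ter : E → V) : Prop :=
  ∀ v v' : V, Relation.TransGen (fun u u' : V => ∃ e, ini e = u ∧ ter e = u') v v'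

/-- The matrix `F^{(q)}_{x,y}` with entry `p_{e'}^q a_{e'}^x b_{e'}^y` at `(e,e')` when
`t(e) = i(e')`, and `0` otherwise. -/
def FmatG {V E : Type*} (ini ter : E → V) (p a b : E → ℝ) (q x y : ℝ) :
    Matrix E E ℝ :=
  fun e e' => if ter e = ini e' then p e' ^ q * a e' ^ x * b e' ^ y else 0

/-- `f` is the entrywise product of the normalized left and right Perron vectors of the
irreducible matrix `F^{(q)}_{x,y(x)}` (spectral radius 1). -/
def IsPerronData {V E : Type*} [Fintype E] [DecidableEq E] (ini ter : E → V)
    (p a b : E → ℝ) (q x yx : ℝ) (f : E → ℝ) : Prop :=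
  specRad (FmatG ini ter p a b q x yx) = 1 ∧
  ∃ u v : E → ℝ, (∀ e, 0 < u e) ∧ (∀ e, 0 < v e) ∧ (∑ e, u e) = 1 ∧
    (FmatG ini ter p a b q x yx).mulVec u = u ∧
    (FmatG ini ter p a b q x yx).vecMul v = v ∧
    (∑ e, v e * u e) = 1 ∧ (∀ e, f e = v e * u e)

/-! ### Planar box-like graph-directed self-affine systems -/

/-- A planar box-like self-affine GIFS: a finite directed graph together with, for each
edge `e`, a contraction `ψ_e(z) = T_e z + t_e` whose linear part is the diagonal matrix
`diag(±a_e, ±b_e)` (when `diag e = true`) or the anti-diagonal matrix with entries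
`±a_e` (top right) and `±b_e` (bottom left) (when `diag e = false`), `0 < a_e, b_e < 1`. -/
structure BoxLikeGIFS (V E : Type*) where
  init : E → V
  term : E → V
  a : E → ℝ
  b : E → ℝ
  sa : E → ℝ
  sb : E → ℝ
  diag : E → Bool
  trans : E → ℝ × ℝ
  a_mem : ∀ e, a e ∈ Set.Ioo (0 : ℝ) 1
  b_mem : ∀ e, b e ∈ Set.Ioo (0 : ℝ) 1
  sa_mem : ∀ e, sa e = 1 ∨ sa e = -1
  sb_mem : ∀ e, sb e = 1 ∨ sb e = -1
  edge_exists : ∀ v, ∃ e, init e = v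

namespace BoxLikeGIFS

variable {V E : Type*}

/-- The contraction `ψ_e`. -/
def map (S : BoxLikeGIFS V E) (e : E) : ℝ × ℝ → ℝ × ℝ := fun z =>
  if S.diag e then
    (S.sa e * S.a e * z.1 + (S.trans e).1, S.sb e * S.b e * z.2 + (S.trans e).2)
  else
    (S.sa e * S.a e * z.2 + (S.trans e).1, S.sb e * S.b e * z.1 + (S.trans e).2)

def StronglyConnected (S : BoxLikeGIFS V E) : Prop := GraphSC S.init S.term

/-- The open unit square `(0,1)²`. -/
def unitSq : Set (ℝ × ℝ) := Set.Ioo (0 : ℝ) 1 ×ˢ Set.Ioo (0 : ℝ) 1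

/-- The rectangular open set condition. -/
def ROSC (S : BoxLikeGIFS V E) : Prop :=
  (∀ e : E, S.map e '' unitSq ⊆ unitSq) ∧
  ∀ e e' : E, e ≠ e' → S.init e = S.init e' →
    Disjoint (S.map e '' unitSq) (S.map e' '' unitSq)

/-- Positive weights summing to one at each vertex. -/
def IsWeights [Fintype E] (S : BoxLikeGIFS V E) (p : E → ℝ) : Prop :=
  (∀ e, 0 < p e) ∧ ∀ v : V, (∑ e : E, if S.init e = v then p e else 0) = 1

/-- `μ` is the associated graph-directed box-like self-affine measure family. -/
def IsGDMeasure [Fintype E] (S : BoxLikeGIFS V E) (p : E → ℝ)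
    (μ : V → Measure (ℝ × ℝ)) : Prop :=
  (∀ v, IsProbabilityMeasure (μ v)) ∧
  ∀ v : V, μ v =
    ∑ e : E, if S.init e = v then
      ENNReal.ofReal (p e) • ((μ (S.term e)).map (S.map e)) else (0 : Measure (ℝ × ℝ))

/-- `X` is the associated graph-directed self-affine carpet family. -/
def IsGDAttractor (S : BoxLikeGIFS V E) (X : V → Set (ℝ × ℝ)) : Prop :=
  (∀ v, (X v).Nonempty ∧ IsCompact (X v)) ∧
  ∀ v : V, X v = ⋃ e : E, ⋃ _ : S.init e = v, S.map e '' X (S.term e)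

/-- The matrix `F^{(q)}_{x,y}` of the system. -/
def Fmat (S : BoxLikeGIFS V E) (p : E → ℝ) (q x y : ℝ) : Matrix E E ℝ :=
  FmatG S.init S.term p S.a S.b q x y

/-- The `(2#E) × (2#E)` block matrix `𝒢^{(q)}_{x,y}`, indexed by `E × Bool`
(`false` = first index of the block, `true` = second). -/
def Gmat (S : BoxLikeGIFS V E) (p : E → ℝ) (τx τy : V → ℝ) (q x y : ℝ) :
    Matrix (E × Bool) (E × Bool) ℝ := fun i j =>
  if S.term i.1 = S.init j.1 then
    if S.diag j.1 then
      if i.2 = false ∧ j.2 = false then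
        p j.1 ^ q * S.a j.1 ^ (x + τx (S.term j.1)) * S.b j.1 ^ (y - τx (S.term j.1))
      else if i.2 = true ∧ j.2 = true then
        p j.1 ^ q * S.b j.1 ^ (x + τy (S.term j.1)) * S.a j.1 ^ (y - τy (S.term j.1))
      else 0
    else
      if i.2 = false ∧ j.2 = true then
        p j.1 ^ q * S.a j.1 ^ (x + τy (S.term j.1)) * S.b j.1 ^ (y - τy (S.term j.1))
      else if i.2 = true ∧ j.2 = false then
        p j.1 ^ q * S.b j.1 ^ (x + τx (S.term j.1)) * S.a j.1 ^ (y - τx (S.term j.1))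
      else 0
  else 0

/-! ### Words -/

/-- An admissible word: consecutive edges are composable. -/
def Admissible (S : BoxLikeGIFS V E) (w : List E) : Prop :=
  List.Chain' (fun e e' => S.term e = S.init e') w

/-- `(c_w, d_w)`: width and height of the rectangle `ψ_w([0,1]²)`. -/
def wdims (S : BoxLikeGIFS V E) : List E → ℝ × ℝ
  | [] => (1, 1)
  | e :: w =>
      if S.diag e then (S.a e * (wdims S w).1, S.b e * (wdims S w).2)
      else (S.a e * (wdims S w).2, S.b e * (wdims S w).1)

/-- Whether `T_w` is diagonal (`true`) or anti-diagonal (`false`). -/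
def wordDiag (S : BoxLikeGIFS V E) : List E → Bool
  | [] => true
  | e :: w => S.diag e == wordDiag S w

/-- The larger singular value `α₁(w) = max(c_w, d_w)` of `T_w`. -/
def alpha1 (S : BoxLikeGIFS V E) (w : List E) : ℝ := max (S.wdims w).1 (S.wdims w).2

/-- The smaller singular value `α₂(w) = min(c_w, d_w)` of `T_w`. -/
def alpha2 (S : BoxLikeGIFS V E) (w : List E) : ℝ := min (S.wdims w).1 (S.wdims w).2

/-- Initial vertex of a (nonempty) word. -/
def wordInit [Nonempty V] (S : BoxLikeGIFS V E) (w : List E) : V :=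
  (w.head?.map S.init).getD (Classical.arbitrary V)

/-- Terminal vertex of a (nonempty) word. -/
def wordTerm [Nonempty V] (S : BoxLikeGIFS V E) (w : List E) : V :=
  (w.getLast?.map S.term).getD (Classical.arbitrary V)

/-- `p_w = p_{w_1} ⋯ p_{w_k}`. -/
def wordProb (p : E → ℝ) (w : List E) : ℝ := (w.map p).prod

/-- `τ_w(q)`: given the values `τx v`, `τy v` of the `L^q`-spectra of the two coordinate
projections of `μ_v`, this is the `L^q`-spectrum of the projection of `μ_{t(w)} ∘ ψ_w⁻¹`
onto the longest side of `ψ_w([0,1]²)`, i.e. `τx (t w)` if `π_w = π_x` and `τy (t w)`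
otherwise. -/
def wordTau [Nonempty V] (S : BoxLikeGIFS V E) (τx τy : V → ℝ) (w : List E) : ℝ :=
  if ((S.wdims w).2 ≤ (S.wdims w).1 ↔ S.wordDiag w = true) then τx (S.wordTerm w)
  else τy (S.wordTerm w)

/-- The modified singular value function
`φ^{s,q}(w) = p_w^q α₁(w)^{τ_w(q)} α₂(w)^{s - τ_w(q)}`. -/
def msvf [Nonempty V] (S : BoxLikeGIFS V E) (p : E → ℝ) (τx τy : V → ℝ)
    (s q : ℝ) (w : List E) : ℝ :=
  wordProb p w ^ q * S.alpha1 w ^ (S.wordTau τx τy w) *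
    S.alpha2 w ^ (s - S.wordTau τx τy w)

/-- The modified singular value function matrix `A_k^{s,q}`. -/
def Amat [Nonempty V] [Fintype E] (S : BoxLikeGIFS V E) (p : E → ℝ) (τx τy : V → ℝ)
    (s q : ℝ) (k : ℕ) : Matrix V V ℝ := fun v v' =>
  ∑ f : Fin k → E,
    if S.Admissible (List.ofFn f) ∧ S.wordInit (List.ofFn f) = v ∧
        S.wordTerm (List.ofFn f) = v'
    then S.msvf p τx τy s q (List.ofFn f) else 0

/-- The family `E^*_δ` of admissible words whose shortest side drops below `δ`
exactly at the last letter. -/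
def EstarDelta (S : BoxLikeGIFS V E) (δ : ℝ) : Set (List E) :=
  {w | w ≠ [] ∧ S.Admissible w ∧ S.alpha2 w < δ ∧ δ ≤ S.alpha2 w.dropLast}

end BoxLikeGIFS

/-! ### Partition of the projections, for the splitting proposition -/

/-- The projection family: `(v, false) ↦ μ_v^x` and `(v, true) ↦ μ_v^y`. -/
def projMeas {V : Type*} (μ : V → Measure (ℝ × ℝ)) (i : V × Bool) : Measure ℝ :=
  if i.2 then (μ i.1).map Prod.snd else (μ i.1).map Prod.fst

/-- `A`, `B` is a partition of the projection family `{μ_v^x, μ_v^y}_v` into two disjoint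
families of cardinality `#V`, on each of which the `L^q`-spectra exist and share a common
value, and which splits `{μ_v^x, μ_v^y}` for each `v`. -/
def GoodPartition {V : Type*} [Fintype V] (μ : V → Measure (ℝ × ℝ))
    (A B : Finset (V × Bool)) : Prop :=
  Disjoint A B ∧ A ∪ B = Finset.univ ∧
  A.card = Fintype.card V ∧ B.card = Fintype.card V ∧
  ∃ τA τB : ℝ → ℝ,
    (∀ q : ℝ, 0 ≤ q → ∀ i ∈ A, HasLq1 (projMeas μ i) q (τA q)) ∧
    (∀ q : ℝ, 0 ≤ q → ∀ i ∈ B, HasLq1 (projMeas μ i) q (τB q)) ∧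
    ∀ v : V, ((v, false) ∈ A ∧ (v, true) ∈ B) ∨ ((v, false) ∈ B ∧ (v, true) ∈ A)

end LqGIFS

end

open LqGIFS MeasureTheory Filter Set

/-! The sum `t` of the spectra of the two projections of `μ_v` does not depend on `v`. Indeed
`μ_v ≥ p_e μ_{t(e)} ∘ ψ_e⁻¹` for `e` starting at `v`, so along every edge the spectra, swapped when
`T_e` is anti-diagonal, cannot increase; their sum is then nonincreasing along edges, hence
constant by strong connectivity, and so the two spectra are carried along every edge unchanged up
to the swap. Consequently `φ^{s,q}(w) = h(w) α₂(w)^{s-t}`, where `h` is multiplicative over the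
edges of `w`, and `‖A_k^{s,q}‖` is the sum of these weights over `E^k`.

As `α₂` is supermultiplicative, the sums are submultiplicative for `s ≤ t`. For `s ≥ t` they are
supermultiplicative up to a constant: any two words are joined by one of finitely many connecting
words, and `α₂(ww') ≤ α₂(w)` bounds the contribution of the extra letters. Fekete's lemma gives
the growth rate in both cases. Since `α₂(w)` lies between `m^k` and `ρ^k` for `w ∈ E^k`, with
`0 < m ≤ ρ < 1`, raising `s` by `d` lowers the logarithm of the rate by an amount between
`d log (1/ρ)` and `d log (1/m)`; it is thus a strictly decreasing homeomorphism of `ℝ`. -/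

namespace LqGIFS

open Topology

section GrowthRate

theorem exists_tendsto_log_div_of_le_mul {u : ℕ → ℝ} {c C : ℝ} (hc : 0 < c) (hC : 0 < C)
    (hlow : ∀ n, c ^ n ≤ u n) (hmul : ∀ k l, u (k + l) ≤ C * (u k * u l)) :
    ∃ L, Tendsto (fun n : ℕ => Real.log (u n) / n) atTop (𝓝 L) := by
  have hu : ∀ n, 0 < u n := fun n => (pow_pos hc n).trans_le (hlow n)
  have hsub : Subadditive fun n => Real.log (C * u n) := fun k l => by
    rw [← Real.log_mul (mul_pos hC (hu k)).ne' (mul_pos hC (hu l)).ne']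
    refine Real.log_le_log (mul_pos hC (hu _)) ?_
    calc C * u (k + l) ≤ C * (C * (u k * u l)) := by gcongr; exact hmul k l
      _ = C * u k * (C * u l) := by ring
  have hbdd : BddBelow (range fun n : ℕ => Real.log (C * u n) / n) := by
    refine ⟨min 0 (Real.log c - |Real.log C|), ?_⟩
    rintro _ ⟨n, rfl⟩
    rcases n.eq_zero_or_pos with rfl | hn
    · simp
    have hn : (1 : ℝ) ≤ n := mod_cast hn
    have hlog : n * Real.log c ≤ Real.log (u n) := by
      rw [← Real.log_pow]
      exact Real.log_le_log (pow_pos hc n) (hlow n)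
    refine (min_le_right _ _).trans ?_
    rw [le_div_iff₀ (by linarith), Real.log_mul hC.ne' (hu n).ne']
    linarith [neg_abs_le (Real.log C), le_mul_of_one_le_right (abs_nonneg (Real.log C)) hn]
  have hlim := (hsub.tendsto_lim hbdd).sub (tendsto_const_div_atTop_nhds_zero_nat (Real.log C))
  refine ⟨_, hlim.congr fun n => ?_⟩
  rw [Real.log_mul hC.ne' (hu n).ne']
  ring

theorem exists_tendsto_log_div_of_mul_le {u : ℕ → ℝ} {c C : ℝ} (hc : 0 < c) (hC : 0 < C)
    (hu : ∀ n, 0 < u n) (hup : ∀ n, u n ≤ C ^ n) (hmul : ∀ k l, c * (u k * u l) ≤ u (k + l)) :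
    ∃ L, Tendsto (fun n : ℕ => Real.log (u n) / n) atTop (𝓝 L) := by
  obtain ⟨L, hL⟩ := exists_tendsto_log_div_of_le_mul (u := fun n => (u n)⁻¹) (inv_pos.2 hC)
    (inv_pos.2 hc) (fun n => by rw [inv_pow]; exact inv_anti₀ (hu n) (hup n)) fun k l => by
      rw [← mul_inv, ← mul_inv]
      exact inv_anti₀ (mul_pos hc (mul_pos (hu k) (hu l))) (hmul k l)
  exact ⟨-L, hL.neg.congr fun n => by rw [Real.log_inv, neg_div, neg_neg]⟩

theorem log_add_le_of_tendsto_log_div {u v : ℕ → ℝ} {a L M : ℝ} (ha : 0 < a)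
    (hu : ∀ n, 0 < u n) (huv : ∀ n, a ^ n * u n ≤ v n)
    (hL : Tendsto (fun n : ℕ => Real.log (u n) / n) atTop (𝓝 L))
    (hM : Tendsto (fun n : ℕ => Real.log (v n) / n) atTop (𝓝 M)) : Real.log a + L ≤ M := by
  refine le_of_tendsto_of_tendsto (hL.const_add _) hM ?_
  filter_upwards [eventually_gt_atTop 0] with n hn
  have hn : (0 : ℝ) < n := mod_cast hn
  have hpow := pow_pos ha n
  calc Real.log a + Real.log (u n) / n = Real.log (a ^ n * u n) / n := by
        rw [Real.log_mul hpow.ne' (hu n).ne', Real.log_pow, add_div,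
          mul_div_cancel_left₀ _ hn.ne']
    _ ≤ Real.log (v n) / n := by
        gcongr
        · exact mul_pos hpow (hu n)
        · exact huv n

end GrowthRate

section DecrementBounds

variable {f : ℝ → ℝ} {A B : ℝ}

theorem strictAnti_of_antitone_add_mul (hB : 0 < B) (hanti : Antitone fun x => f x + B * x) :
    StrictAnti f := fun x y hxy => by
  linarith [hanti hxy.le, mul_lt_mul_of_pos_left hxy hB]

theorem continuous_of_monotone_add_mul (hf : Antitone f) (hmono : Monotone fun x => f x + A * x) :
    Continuous f := by
  refine LipschitzWith.continuous (K := A.toNNReal) (LipschitzWith.of_le_add_mul _ fun x y => ?_)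
  rw [Real.dist_eq]
  rcases le_total x y with hxy | hxy
  · have hA := mul_le_mul_of_nonneg_right (Real.le_coe_toNNReal A) (sub_nonneg.2 hxy)
    rw [abs_sub_comm, abs_of_nonneg (sub_nonneg.2 hxy)]
    linarith [hmono hxy]
  · exact (hf hxy).trans (le_add_of_nonneg_right (by positivity))

theorem bijective_of_monotone_of_antitone_add_mul (hB : 0 < B)
    (hmono : Monotone fun x => f x + A * x) (hanti : Antitone fun x => f x + B * x) :
    Function.Bijective f := by
  have hf := strictAnti_of_antitone_add_mul hB hanti
  refine ⟨hf.injective,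
    (continuous_of_monotone_add_mul hf.antitone hmono).surjective' ?_ ?_⟩
  · refine tendsto_atTop_mono' _ ?_ (tendsto_atTop_add_const_left _ (f 0)
      (tendsto_neg_atBot_atTop.comp (tendsto_id.const_mul_atBot hB)))
    filter_upwards [eventually_le_atBot 0] with x hx
    simp only [Function.comp_apply, id_eq]
    linarith [hanti hx]
  · refine tendsto_atBot_mono' _ ?_ (tendsto_atBot_add_const_left _ (f 0)
      (tendsto_neg_atTop_atBot.comp (tendsto_id.const_mul_atTop hB)))
    filter_upwards [eventually_ge_atTop 0] with x hx
    simp only [Function.comp_apply, id_eq]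
    linarith [hanti hx]

end DecrementBounds

section MomentSum

/-- The power `x ^ q`, except that `0 ^ 0 = 0`: the contribution to a moment sum of a mesh cube of
mass `x`, the cubes of mass zero being left out. -/
noncomputable def momentPow (x q : ℝ) : ℝ := if x = 0 then 0 else x ^ q

theorem momentPow_nonneg {x : ℝ} (hx : 0 ≤ x) (q : ℝ) : 0 ≤ momentPow x q := by
  unfold momentPow
  split_ifs <;> positivity

theorem momentPow_pos {x : ℝ} (hx : 0 < x) (q : ℝ) : 0 < momentPow x q := by
  rw [momentPow, if_neg hx.ne']
  positivity

theorem momentPow_le_of_le_mul_add {x y z K q : ℝ} (hx : 0 ≤ x) (hy : 0 ≤ y) (hz : 0 ≤ z)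
    (hK : 0 ≤ K) (hq : 0 ≤ q) (h : x ≤ K * (y + z)) :
    momentPow x q ≤ (2 * K) ^ q * (momentPow y q + momentPow z q) := by
  wlog hzy : z ≤ y generalizing y z
  · rw [add_comm (momentPow y q)]
    exact this hz hy (by rwa [add_comm]) (not_le.1 hzy).le
  have hy' := momentPow_nonneg hy q
  have hz' := momentPow_nonneg hz q
  rcases hx.eq_or_lt with rfl | hx
  · rw [momentPow, if_pos rfl]
    positivity
  have hxy : x ≤ 2 * K * y := by linarith [mul_le_mul_of_nonneg_left hzy hK]
  have hy0 : y ≠ 0 := by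
    rintro rfl
    linarith
  calc momentPow x q = x ^ q := if_neg hx.ne'
    _ ≤ (2 * K * y) ^ q := by gcongr
    _ = (2 * K) ^ q * momentPow y q := by
        rw [Real.mul_rpow (by positivity) hy, momentPow, if_neg hy0]
    _ ≤ (2 * K) ^ q * (momentPow y q + momentPow z q) := by
        gcongr
        linarith

theorem Dq1_eq_tsum_momentPow (ν : Measure ℝ) [IsFiniteMeasure ν] (δ q : ℝ) :
    Dq1 ν δ q = ∑' k, momentPow (ν.real (meshCube1 δ k)) q :=
  tsum_congr fun k => if_congr (measureReal_eq_zero_iff (by finiteness)).symm rfl rfl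

theorem mem_meshCube1_floor {δ : ℝ} (hδ : 0 < δ) (x : ℝ) : x ∈ meshCube1 δ ⌊x / δ⌋ := by
  rw [meshCube1, mem_Icc, ← le_div_iff₀ hδ, ← div_le_iff₀ hδ]
  exact ⟨Int.floor_le _, (Int.lt_floor_add_one _).le⟩

theorem exists_measureReal_meshCube1_pos (ν : Measure ℝ) [IsFiniteMeasure ν] [NeZero ν] {δ : ℝ}
    (hδ : 0 < δ) : ∃ k, 0 < ν.real (meshCube1 δ k) := by
  by_contra! h
  have hnull : ∀ k, ν (meshCube1 δ k) = 0 := fun k =>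
    (measureReal_eq_zero_iff).1 ((h k).antisymm measureReal_nonneg)
  have hcover : ⋃ k, meshCube1 δ k = univ :=
    eq_univ_of_forall fun x => mem_iUnion.2 ⟨_, mem_meshCube1_floor hδ x⟩
  have huniv := measure_iUnion_null hnull
  rw [hcover, Measure.measure_univ_eq_zero] at huniv
  exact NeZero.ne ν huniv

theorem finite_setOf_measure_meshCube1_ne_zero {ν : Measure ℝ} {R : ℝ}
    (hR : ∀ᵐ x ∂ν, |x| ≤ R) {δ : ℝ} (hδ : 0 < δ) : {k | ν (meshCube1 δ k) ≠ 0}.Finite := by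
  refine (Set.finite_Icc ⌊-R / δ - 1⌋ ⌈R / δ⌉).subset fun k hk => ?_
  obtain ⟨x, hxk, hxR⟩ := (frequently_ae_mem_iff.2 hk).and_eventually hR |>.exists
  obtain ⟨hRx, hxR⟩ := abs_le.1 hxR
  have hlow : -R / δ - 1 ≤ k := by
    rw [sub_le_iff_le_add, div_le_iff₀ hδ]
    exact hRx.trans hxk.2
  have hupp : (k : ℝ) ≤ R / δ := by
    rw [le_div_iff₀ hδ]
    exact hxk.1.trans hxR
  exact ⟨Int.cast_le.1 ((Int.floor_le _).trans hlow), Int.cast_le.1 (hupp.trans (Int.le_ceil _))⟩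

theorem summable_momentPow_meshCube1 {ν : Measure ℝ} {R : ℝ} (hR : ∀ᵐ x ∂ν, |x| ≤ R) {δ : ℝ}
    (hδ : 0 < δ) (q : ℝ) : Summable fun k => momentPow (ν.real (meshCube1 δ k)) q := by
  refine summable_of_hasFiniteSupport
    ((finite_setOf_measure_meshCube1_ne_zero hR hδ).subset fun k hk hnull => hk ?_)
  exact if_pos (by rw [measureReal_def, hnull, ENNReal.toReal_zero])

theorem Dq1_pos {ν : Measure ℝ} [IsFiniteMeasure ν] [NeZero ν] {R : ℝ} (hR : ∀ᵐ x ∂ν, |x| ≤ R)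
    {δ : ℝ} (hδ : 0 < δ) (q : ℝ) : 0 < Dq1 ν δ q := by
  obtain ⟨k, hk⟩ := exists_measureReal_meshCube1_pos ν hδ
  rw [Dq1_eq_tsum_momentPow]
  exact (summable_momentPow_meshCube1 hR hδ q).tsum_pos
    (fun _ => momentPow_nonneg measureReal_nonneg q) k (momentPow_pos hk q)

theorem exists_equiv_mapsTo_meshCube1 {a δ : ℝ} (ha : a ≠ 0) (hδ : 0 < δ) (c : ℝ) :
    ∃ σ : ℤ ≃ ℤ, ∀ k, MapsTo (fun x => a * x + c) (meshCube1 (δ / |a|) k)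
      (meshCube1 δ (σ k) ∪ meshCube1 δ (σ k + 1)) := by
  have hunion : ∀ (n : ℤ) (y : ℝ), n * δ ≤ y → y ≤ (n + 2) * δ →
      y ∈ meshCube1 δ n ∪ meshCube1 δ (n + 1) := fun n y hny hyn => by
    rcases le_total y ((n + 1) * δ) with h | h
    · exact Or.inl ⟨hny, h⟩
    · exact Or.inr ⟨by push_cast; exact h, by push_cast; linarith⟩
  have hscale : ∀ {k : ℤ} {x : ℝ}, x ∈ meshCube1 (δ / |a|) k →
      k * δ ≤ |a| * x ∧ |a| * x ≤ (k + 1) * δ := fun {k x} hx => by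
    rw [meshCube1, mem_Icc, mul_div, mul_div, div_le_iff₀' (abs_pos.2 ha),
      le_div_iff₀' (abs_pos.2 ha)] at hx
    exact hx
  have hlow := (le_div_iff₀ hδ).1 (Int.floor_le (c / δ))
  have hupp := ((div_lt_iff₀ hδ).1 (Int.lt_floor_add_one (c / δ))).le
  rcases ha.lt_or_gt with ha | ha
  · refine ⟨Equiv.subLeft (⌊c / δ⌋ - 1), fun k x hx => ?_⟩
    obtain ⟨hkx, hxk⟩ := hscale hx
    rw [abs_of_neg ha] at hkx hxk
    apply hunion <;> simp only [Equiv.subLeft_apply] <;> push_cast <;> linarith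
  · refine ⟨Equiv.addRight ⌊c / δ⌋, fun k x hx => ?_⟩
    obtain ⟨hkx, hxk⟩ := hscale hx
    rw [abs_of_pos ha] at hkx hxk
    apply hunion <;> simp only [Equiv.coe_addRight] <;> push_cast <;> linarith

theorem measureReal_le_of_smul_map_le {α β : Type*} [MeasurableSpace α] [MeasurableSpace β]
    {ν : Measure α} {ρ : Measure β} [IsFiniteMeasure ν] [IsFiniteMeasure ρ] {f : α → β}
    (hf : Measurable f) {p : ℝ} (hp : 0 < p) (h : ENNReal.ofReal p • ν.map f ≤ ρ) {A : Set α}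
    {B : Set β} (hB : MeasurableSet B) (hAB : MapsTo f A B) : ν.real A ≤ p⁻¹ * ρ.real B := by
  rw [← div_eq_inv_mul, le_div_iff₀' hp]
  calc p * ν.real A ≤ p * ν.real (f ⁻¹' B) := by
        gcongr
        · finiteness
        · exact hAB
    _ = (ENNReal.ofReal p • ν.map f).real B := by
        rw [measureReal_ennreal_smul_apply, ENNReal.toReal_ofReal hp.le,
          map_measureReal_apply hf hB]
    _ ≤ ρ.real B := ENNReal.toReal_mono (measure_ne_top ρ B) (h B)

theorem momentPow_meshCube1_le {ν ρ : Measure ℝ} [IsFiniteMeasure ν] [IsFiniteMeasure ρ]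
    {f : ℝ → ℝ} (hf : Measurable f) {p q δ δ' : ℝ} (hp : 0 < p) (hq : 0 ≤ q)
    (h : ENNReal.ofReal p • ν.map f ≤ ρ) {k l m : ℤ}
    (hk : MapsTo f (meshCube1 δ' k) (meshCube1 δ l ∪ meshCube1 δ m)) :
    momentPow (ν.real (meshCube1 δ' k)) q ≤ (2 * p⁻¹) ^ q *
      (momentPow (ρ.real (meshCube1 δ l)) q + momentPow (ρ.real (meshCube1 δ m)) q) := by
  refine momentPow_le_of_le_mul_add measureReal_nonneg measureReal_nonneg measureReal_nonneg
    (by positivity) hq ?_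
  calc ν.real (meshCube1 δ' k) ≤ p⁻¹ * ρ.real (meshCube1 δ l ∪ meshCube1 δ m) :=
        measureReal_le_of_smul_map_le hf hp h (measurableSet_Icc.union measurableSet_Icc) hk
    _ ≤ p⁻¹ * (ρ.real (meshCube1 δ l) + ρ.real (meshCube1 δ m)) := by
        gcongr
        exact measureReal_union_le _ _

theorem Dq1_div_abs_le {ν ρ : Measure ℝ} [IsFiniteMeasure ν] [IsFiniteMeasure ρ]
    {R R' p a c q δ : ℝ} (hν : ∀ᵐ x ∂ν, |x| ≤ R) (hρ : ∀ᵐ x ∂ρ, |x| ≤ R') (hp : 0 < p)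
    (ha : a ≠ 0) (hq : 0 ≤ q) (h : ENNReal.ofReal p • ν.map (fun x => a * x + c) ≤ ρ)
    (hδ : 0 < δ) : Dq1 ν (δ / |a|) q ≤ (2 * p⁻¹) ^ q * 2 * Dq1 ρ δ q := by
  obtain ⟨σ, hσ⟩ := exists_equiv_mapsTo_meshCube1 ha hδ c
  have hsum : HasSum (fun k => momentPow (ρ.real (meshCube1 δ k)) q) (Dq1 ρ δ q) := by
    rw [Dq1_eq_tsum_momentPow]
    exact (summable_momentPow_meshCube1 hρ hδ q).hasSum
  have hσ₁ := σ.hasSum_iff.2 hsum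
  have hσ₂ := (σ.trans (Equiv.addRight 1)).hasSum_iff.2 hsum
  have hδa : 0 < δ / |a| := div_pos hδ (abs_pos.2 ha)
  have hbound := (hσ₁.add hσ₂).mul_left ((2 * p⁻¹) ^ q)
  rw [← two_mul, ← mul_assoc] at hbound
  rw [Dq1_eq_tsum_momentPow]
  exact hasSum_le (fun k => momentPow_meshCube1_le (by fun_prop) hp hq h (hσ k))
    (summable_momentPow_meshCube1 hν hδa q).hasSum hbound

end MomentSum

section Spectrum

variable {ν ρ : Measure ℝ}

theorem tendsto_neg_log_nhdsGT_zero :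
    Tendsto (fun δ : ℝ => -Real.log δ) (𝓝[>] 0) atTop :=
  tendsto_neg_atBot_atTop.comp Real.tendsto_log_nhdsGT_zero

theorem HasLq1.tendsto_rescale {q s κ : ℝ} (hs : HasLq1 ν q s) (hκ : 0 < κ) :
    Tendsto (fun δ : ℝ => Real.log (Dq1 ν (δ / κ) q) / -Real.log δ) (𝓝[>] 0) (𝓝 s) := by
  have hscale : Tendsto (fun δ : ℝ => δ / κ) (𝓝[>] 0) (𝓝[>] 0) := by
    refine tendsto_nhdsWithin_iff.2 ⟨?_, ?_⟩
    · exact tendsto_nhdsWithin_of_tendsto_nhds ((continuous_id.div_const κ).tendsto' 0 0 (by simp))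
    · filter_upwards [self_mem_nhdsWithin] with δ hδ using div_pos hδ hκ
  have hratio : Tendsto (fun δ => 1 + Real.log κ / -Real.log δ) (𝓝[>] 0) (𝓝 (1 + 0)) :=
    (tendsto_neg_log_nhdsGT_zero.const_div_atTop _).const_add 1
  have hprod := (hs.comp hscale).mul hratio
  rw [add_zero, mul_one] at hprod
  refine hprod.congr' ?_
  filter_upwards [self_mem_nhdsWithin, tendsto_neg_log_nhdsGT_zero.eventually_ne_atTop 0,
    (tendsto_neg_log_nhdsGT_zero.comp hscale).eventually_ne_atTop 0] with δ hδ hlog hlog'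
  simp only [Function.comp_apply, Real.log_div (ne_of_gt hδ) hκ.ne'] at hlog' ⊢
  have hlog'' : -(Real.log δ - Real.log κ) = -Real.log δ + Real.log κ := by ring
  rw [hlog''] at hlog' ⊢
  have hfactor : 1 + Real.log κ / -Real.log δ = (-Real.log δ + Real.log κ) / -Real.log δ := by
    rw [add_div, div_self hlog]
  rw [hfactor, div_mul_div_cancel₀ hlog']

theorem HasLq1.le_of_Dq1_rescale_le {q s t κ C : ℝ} (hs : HasLq1 ν q s) (ht : HasLq1 ρ q t)
    (hκ : 0 < κ) (hpos : ∀ δ, 0 < δ → 0 < Dq1 ν δ q)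
    (hle : ∀ δ, 0 < δ → Dq1 ν (δ / κ) q ≤ C * Dq1 ρ δ q) : s ≤ t := by
  have hC := tendsto_neg_log_nhdsGT_zero.const_div_atTop (Real.log C)
  have hlim := hC.add ht
  rw [zero_add] at hlim
  refine le_of_tendsto_of_tendsto (hs.tendsto_rescale hκ) hlim ?_
  filter_upwards [self_mem_nhdsWithin, tendsto_neg_log_nhdsGT_zero.eventually_gt_atTop 0]
    with δ hδ hlog
  have hν := hpos _ (div_pos hδ hκ)
  have hCρ : C * Dq1 ρ δ q ≠ 0 := (hν.trans_le (hle δ hδ)).ne'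
  rw [← add_div, ← Real.log_mul (left_ne_zero_of_mul hCρ) (right_ne_zero_of_mul hCρ)]
  gcongr
  exact hle δ hδ

theorem HasLq1.le_of_smul_map_affine_le [IsFiniteMeasure ν] [NeZero ν] [IsFiniteMeasure ρ]
    {R R' p a c q s t : ℝ} (hs : HasLq1 ν q s) (ht : HasLq1 ρ q t) (hν : ∀ᵐ x ∂ν, |x| ≤ R)
    (hρ : ∀ᵐ x ∂ρ, |x| ≤ R') (hp : 0 < p) (ha : a ≠ 0) (hq : 0 ≤ q)
    (h : ENNReal.ofReal p • ν.map (fun x => a * x + c) ≤ ρ) : s ≤ t :=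
  hs.le_of_Dq1_rescale_le ht (abs_pos.2 ha) (fun _ hδ => Dq1_pos hν hδ q)
    fun _ hδ => Dq1_div_abs_le hν hρ hp ha hq h hδ

end Spectrum

section Tightness

theorem isTightMeasureSet_of_finite {α : Type*} [MeasurableSpace α] [TopologicalSpace α]
    {T : Set (Measure α)} (hT : T.Finite) (h : ∀ μ ∈ T, IsTightMeasureSet {μ}) :
    IsTightMeasureSet T := by
  induction T, hT using Set.Finite.induction_on with
  | empty =>
    exact isTightMeasureSet_iff_exists_isCompact_measure_compl_le.2 fun _ _ =>
      ⟨∅, isCompact_empty, by simp⟩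
  | insert _ _ ih =>
    rw [insert_eq]
    exact (h _ (mem_insert _ _)).union (ih fun μ hμ => h μ (mem_insert_of_mem _ hμ))

theorem tendsto_iSup_measure_norm_gt {ι α : Type*} [Finite ι] [MeasurableSpace α]
    [NormedAddCommGroup α] [CompleteSpace α] [SecondCountableTopology α] [BorelSpace α]
    (μ : ι → Measure α) [∀ i, IsFiniteMeasure (μ i)] :
    Tendsto (fun r : ℝ => ⨆ i, μ i {z | r < ‖z‖}) atTop (𝓝 0) := by
  have htight : IsTightMeasureSet (range μ) :=
    isTightMeasureSet_of_finite (finite_range μ) <|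
      forall_mem_range.2 fun _ => isTightMeasureSet_singleton
  simpa only [iSup_range] using tendsto_measure_norm_gt_of_isTightMeasureSet htight

end Tightness

theorem GraphSC.eq_of_le {V E α : Type*} [PartialOrder α] {ini ter : E → V}
    (h : GraphSC ini ter) {f : V → α} (hf : ∀ e, f (ter e) ≤ f (ini e)) (v v' : V) :
    f v = f v' := by
  have hle : ∀ u u', f u' ≤ f u := fun u u' => by
    induction h u u' with
    | single he =>
      obtain ⟨e, rfl, rfl⟩ := he
      exact hf e
    | tail _ he ih =>
      obtain ⟨e, rfl, rfl⟩ := he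
      exact (hf e).trans ih
  exact le_antisymm (hle _ _) (hle _ _)

theorem max_rpow_mul_min_rpow {c d : ℝ} (hc : 0 < c) (hd : 0 < d) (x y s : ℝ) :
    max c d ^ (if d ≤ c then x else y) * min c d ^ (s - if d ≤ c then x else y) =
      c ^ x * d ^ y * min c d ^ (s - (x + y)) := by
  split_ifs with hdc
  · rw [max_eq_left hdc, min_eq_right hdc, mul_assoc, ← Real.rpow_add hd]
    ring_nf
  · rw [max_eq_right (not_le.1 hdc).le, min_eq_left (not_le.1 hdc).le, mul_comm (c ^ x), mul_assoc,
      ← Real.rpow_add hc]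
    ring_nf

theorem sum_le_sum_of_injOn {α β : Type*} {s : Finset α} {t : Finset β} {f : α → ℝ} {g : β → ℝ}
    (i : α → β) (hi : ∀ x ∈ s, i x ∈ t) (hinj : InjOn i s) (hfg : ∀ x ∈ s, f x ≤ g (i x))
    (hg : ∀ y ∈ t, 0 ≤ g y) : ∑ x ∈ s, f x ≤ ∑ y ∈ t, g y :=
  calc ∑ x ∈ s, f x ≤ ∑ x ∈ s, g (i x) := Finset.sum_le_sum hfg
    _ = ∑ y ∈ s.image i, g y := (Finset.sum_image hinj).symm
    _ ≤ ∑ y ∈ t, g y := Finset.sum_le_sum_of_subset_of_nonneg (Finset.image_subset_iff.2 hi)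
      fun y hy _ => hg y hy

namespace BoxLikeGIFS

variable {V E : Type*}

theorem nonempty_edge [Nonempty V] (S : BoxLikeGIFS V E) : Nonempty E :=
  (S.edge_exists (Classical.arbitrary V)).nonempty

variable (S : BoxLikeGIFS V E)

section Maps

theorem exists_ratio_bounds [Finite E] [Nonempty E] :
    ∃ m ∈ Ioo (0 : ℝ) 1, ∃ r ∈ Ioo (0 : ℝ) 1, ∀ e, S.a e ∈ Icc m r ∧ S.b e ∈ Icc m r := by
  obtain ⟨e₀, h₀⟩ := Finite.exists_min fun e => min (S.a e) (S.b e)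
  obtain ⟨e₁, h₁⟩ := Finite.exists_max fun e => max (S.a e) (S.b e)
  refine ⟨min (S.a e₀) (S.b e₀),
    ⟨lt_min (S.a_mem e₀).1 (S.b_mem e₀).1, (min_le_left _ _).trans_lt (S.a_mem e₀).2⟩,
    max (S.a e₁) (S.b e₁),
    ⟨(S.a_mem e₁).1.trans_le (le_max_left _ _), max_lt (S.a_mem e₁).2 (S.b_mem e₁).2⟩,
    fun e => ?_⟩
  have hmin := le_min_iff.1 (h₀ e)
  have hmax := max_le_iff.1 (h₁ e)
  exact ⟨⟨hmin.1, hmax.1⟩, hmin.2, hmax.2⟩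

theorem sa_mul_a_ne_zero (e : E) : S.sa e * S.a e ≠ 0 := by
  refine mul_ne_zero ?_ (S.a_mem e).1.ne'
  rcases S.sa_mem e with h | h <;> rw [h] <;> norm_num

theorem sb_mul_b_ne_zero (e : E) : S.sb e * S.b e ≠ 0 := by
  refine mul_ne_zero ?_ (S.b_mem e).1.ne'
  rcases S.sb_mem e with h | h <;> rw [h] <;> norm_num

theorem abs_sa_mul_a (e : E) : |S.sa e * S.a e| = S.a e := by
  rw [abs_mul, abs_of_pos (S.a_mem e).1]
  rcases S.sa_mem e with h | h <;> simp [h]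

theorem abs_sb_mul_b (e : E) : |S.sb e * S.b e| = S.b e := by
  rw [abs_mul, abs_of_pos (S.b_mem e).1]
  rcases S.sb_mem e with h | h <;> simp [h]

theorem map_apply (e : E) (z : ℝ × ℝ) : S.map e z =
    (S.sa e * S.a e * (if S.diag e then z.1 else z.2) + (S.trans e).1,
      S.sb e * S.b e * (if S.diag e then z.2 else z.1) + (S.trans e).2) := by
  unfold map
  split_ifs <;> rfl

theorem continuous_map (e : E) : Continuous (S.map e) := by
  unfold map
  split_ifs <;> fun_prop

theorem norm_map_le {e : E} {r : ℝ} (ha : S.a e ≤ r) (hb : S.b e ≤ r) (z : ℝ × ℝ) :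
    ‖S.map e z‖ ≤ r * ‖z‖ + ‖S.trans e‖ := by
  have hr : 0 ≤ r := (S.a_mem e).1.le.trans ha
  have hcoord : ∀ {c x y : ℝ}, |c| ≤ r → |x| ≤ ‖z‖ → |y| ≤ ‖S.trans e‖ →
      ‖c * x + y‖ ≤ r * ‖z‖ + ‖S.trans e‖ := fun {c x y} hc hx hy => by
    rw [Real.norm_eq_abs]
    refine (abs_add_le _ _).trans (add_le_add ?_ hy)
    rw [abs_mul]
    gcongr
  rw [map_apply, Prod.norm_def]
  refine max_le (hcoord ((S.abs_sa_mul_a e).trans_le ha) ?_ (norm_fst_le (S.trans e)))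
    (hcoord ((S.abs_sb_mul_b e).trans_le hb) ?_ (norm_snd_le (S.trans e))) <;>
  split_ifs
  exacts [norm_fst_le z, norm_snd_le z, norm_snd_le z, norm_fst_le z]

theorem exists_lt_norm_of_lt_norm_map [Finite E] [Nonempty E] {r : ℝ} (hr : r ∈ Ioo 0 1)
    (hS : ∀ e, S.a e ≤ r ∧ S.b e ≤ r) :
    ∃ R, ∀ e z x, R + r * x < ‖S.map e z‖ → R + x < ‖z‖ := by
  obtain ⟨e₁, htrans⟩ := Finite.exists_max fun e => ‖S.trans e‖
  have hr' : 0 < 1 - r := sub_pos.2 hr.2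
  have hfix : r * (‖S.trans e₁‖ / (1 - r)) + ‖S.trans e₁‖ = ‖S.trans e₁‖ / (1 - r) := by
    field_simp
    ring
  refine ⟨‖S.trans e₁‖ / (1 - r), fun e z x hz => lt_of_mul_lt_mul_left ?_ hr.1.le⟩
  linarith [S.norm_map_le (hS e).1 (hS e).2 z, htrans e]

end Maps

section Measures

variable {S} [Fintype E] {p : E → ℝ} {μ : V → Measure (ℝ × ℝ)}

theorem IsWeights.sum_ofReal (hp : S.IsWeights p) (v : V) :
    (∑ e, if S.init e = v then ENNReal.ofReal (p e) else 0) = 1 := by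
  rw [← ENNReal.ofReal_one, ← hp.2 v, ENNReal.ofReal_sum_of_nonneg]
  · refine Finset.sum_congr rfl fun e _ => ?_
    split_ifs <;> simp
  · intro e _
    split_ifs
    exacts [(hp.1 e).le, le_rfl]

theorem IsGDMeasure.apply_eq (hμ : S.IsGDMeasure p μ) (v : V) {A : Set (ℝ × ℝ)}
    (hA : MeasurableSet A) :
    μ v A = ∑ e, if S.init e = v then
      ENNReal.ofReal (p e) * μ (S.term e) (S.map e ⁻¹' A) else 0 := by
  conv_lhs => rw [hμ.2 v]
  rw [Measure.finsetSum_apply]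
  refine Finset.sum_congr rfl fun e _ => ?_
  split_ifs
  · rw [Measure.smul_apply, Measure.map_apply (S.continuous_map e).measurable hA, smul_eq_mul]
  · simp

theorem IsGDMeasure.smul_map_le (hμ : S.IsGDMeasure p μ) (e : E) :
    ENNReal.ofReal (p e) • (μ (S.term e)).map (S.map e) ≤ μ (S.init e) := by
  refine Measure.le_iff.2 fun A hA => ?_
  rw [Measure.smul_apply, Measure.map_apply (S.continuous_map e).measurable hA, smul_eq_mul,
    hμ.apply_eq _ hA]
  refine (Finset.single_le_sum (fun _ _ => zero_le) (Finset.mem_univ e)).trans' ?_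
  rw [if_pos rfl]

theorem IsGDMeasure.measure_le_iSup (hμ : S.IsGDMeasure p μ) (hp : S.IsWeights p)
    {A B : Set (ℝ × ℝ)} (hA : MeasurableSet A) (hAB : ∀ e, S.map e ⁻¹' A ⊆ B) (v : V) :
    μ v A ≤ ⨆ u, μ u B := by
  have hterm : ∀ e, μ (S.term e) (S.map e ⁻¹' A) ≤ ⨆ u, μ u B := fun e =>
    (measure_mono (hAB e)).trans (le_iSup (fun u => μ u B) _)
  calc μ v A = _ := hμ.apply_eq v hA
    _ ≤ ∑ e, (if S.init e = v then ENNReal.ofReal (p e) else 0) * ⨆ u, μ u B := by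
        gcongr with e
        rw [ite_mul, zero_mul]
        split_ifs
        · gcongr
          exact hterm e
        · exact le_rfl
    _ = ⨆ u, μ u B := by rw [← Finset.sum_mul, hp.sum_ofReal, one_mul]

theorem IsGDMeasure.exists_ae_norm_le [Finite V] [Nonempty V] (hμ : S.IsGDMeasure p μ)
    (hp : S.IsWeights p) : ∃ R, ∀ v, ∀ᵐ z ∂μ v, ‖z‖ ≤ R := by
  have := S.nonempty_edge
  have := hμ.1
  obtain ⟨_, _, r, hr, hS⟩ := S.exists_ratio_bounds
  obtain ⟨R, hR⟩ := S.exists_lt_norm_of_lt_norm_map hr fun e => ⟨(hS e).1.2, (hS e).2.2⟩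
  set F : ℝ → ENNReal := fun x => ⨆ v, μ v {z | R + x < ‖z‖}
  have hcontract : ∀ x, F (r * x) ≤ F x := fun x => iSup_le <|
    hμ.measure_le_iSup hp (measurableSet_lt measurable_const measurable_norm) fun e z => hR e z x
  have hiter : ∀ n : ℕ, F 1 ≤ F (r⁻¹ ^ n) := fun n => by
    induction n with
    | zero => rw [pow_zero]
    | succ n ih =>
      refine ih.trans ((hcontract (r⁻¹ ^ (n + 1))).trans' (le_of_eq ?_))
      rw [pow_succ', mul_inv_cancel_left₀ hr.1.ne']
  have hlim : Tendsto (fun n : ℕ => F (r⁻¹ ^ n)) atTop (𝓝 0) :=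
    (tendsto_iSup_measure_norm_gt μ).comp <| tendsto_atTop_add_const_left _ R
      (tendsto_pow_atTop_atTop_of_one_lt ((one_lt_inv₀ hr.1).2 hr.2))
  have hzero : F 1 = 0 := nonpos_iff_eq_zero.1 (ge_of_tendsto' hlim hiter)
  refine ⟨R + 1, fun v => ?_⟩
  rw [ae_iff]
  simp only [not_le]
  exact nonpos_iff_eq_zero.1 ((le_iSup (fun v => μ v {z | R + 1 < ‖z‖}) v).trans hzero.le)

end Measures

section Splitting

/-- The splitting of the projections: `τx v` and `τy v`, the values at a fixed `q` of the spectra of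
the two coordinate projections at the vertex `v`, are carried along each edge, preserved by the
diagonal maps and exchanged by the anti-diagonal ones, and their sum is `t` at every vertex. -/
structure IsSplitting (τx τy : V → ℝ) (t : ℝ) : Prop where
  term_eq : ∀ e, (τx (S.term e), τy (S.term e)) =
    if S.diag e then (τx (S.init e), τy (S.init e)) else (τy (S.init e), τx (S.init e))
  sum_eq : ∀ v, τx v + τy v = t

variable {S} {p : E → ℝ} {μ : V → Measure (ℝ × ℝ)} {q : ℝ} {τx τy : V → ℝ}

theorem exists_isSplitting_of_le [Nonempty V] (hSC : S.StronglyConnected)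
    (hle : ∀ e, (τx (S.term e), τy (S.term e)) ≤
      if S.diag e then (τx (S.init e), τy (S.init e)) else (τy (S.init e), τx (S.init e))) :
    ∃ t, S.IsSplitting τx τy t := by
  have hsum_le : ∀ e, τx (S.term e) + τy (S.term e) ≤ τx (S.init e) + τy (S.init e) := fun e => by
    have h := hle e
    split_ifs at h
    · exact add_le_add h.1 h.2
    · exact (add_le_add h.1 h.2).trans_eq (add_comm _ _)
  have hsum : ∀ v v', τx v + τy v = τx v' + τy v' :=
    hSC.eq_of_le (f := fun v => τx v + τy v) hsum_le
  refine ⟨_, fun e => ?_, fun v => hsum v (Classical.arbitrary V)⟩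
  have h := hle e
  have hsum_e := hsum (S.term e) (S.init e)
  split_ifs at h ⊢ <;> obtain ⟨hx, hy⟩ := h <;> dsimp only at hx hy <;> ext <;> dsimp only <;>
    linarith

theorem IsGDMeasure.le_of_hasLq1_map [Finite V] [Nonempty V] [Fintype E]
    (hμ : S.IsGDMeasure p μ) (hp : S.IsWeights p) (hq : 0 ≤ q) {π π' : ℝ × ℝ →L[ℝ] ℝ} {e : E}
    {a c s t : ℝ} (ha : a ≠ 0) (hmap : ∀ z, π (S.map e z) = a * π' z + c)
    (hs : HasLq1 ((μ (S.term e)).map π') q s) (ht : HasLq1 ((μ (S.init e)).map π) q t) :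
    s ≤ t := by
  have := hμ.1
  have : IsProbabilityMeasure ((μ (S.term e)).map π') :=
    Measure.isProbabilityMeasure_map π'.continuous.aemeasurable
  obtain ⟨R, hR⟩ := hμ.exists_ae_norm_le hp
  have hbdd : ∀ (f : ℝ × ℝ →L[ℝ] ℝ) v, ∀ᵐ x ∂(μ v).map f, |x| ≤ ‖f‖ * R := fun f v => by
    rw [ae_map_iff f.continuous.aemeasurable (measurableSet_le (by fun_prop) measurable_const)]
    filter_upwards [hR v] with z hz using f.le_opNorm_of_le hz
  refine hs.le_of_smul_map_affine_le ht (hbdd π' _) (hbdd π _) (hp.1 e) ha hq (c := c) ?_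
  calc ENNReal.ofReal (p e) • ((μ (S.term e)).map π').map (fun x => a * x + c)
      = (ENNReal.ofReal (p e) • (μ (S.term e)).map (S.map e)).map π := by
        rw [Measure.map_smul, Measure.map_map (by fun_prop) (by fun_prop),
          Measure.map_map (by fun_prop) (S.continuous_map e).measurable]
        congr 2
        exact funext fun z => (hmap z).symm
    _ ≤ (μ (S.init e)).map π := Measure.map_mono (hμ.smul_map_le e) (by fun_prop)

theorem IsGDMeasure.exists_isSplitting [Finite V] [Nonempty V] [Fintype E]
    (hμ : S.IsGDMeasure p μ) (hp : S.IsWeights p) (hSC : S.StronglyConnected) (hq : 0 ≤ q)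
    (hτx : ∀ v, HasLq1 ((μ v).map Prod.fst) q (τx v))
    (hτy : ∀ v, HasLq1 ((μ v).map Prod.snd) q (τy v)) : ∃ t, S.IsSplitting τx τy t := by
  let πx := ContinuousLinearMap.fst ℝ ℝ ℝ
  let πy := ContinuousLinearMap.snd ℝ ℝ ℝ
  have hx : ∀ v, HasLq1 ((μ v).map πx) q (τx v) := hτx
  have hy : ∀ v, HasLq1 ((μ v).map πy) q (τy v) := hτy
  refine exists_isSplitting_of_le hSC fun e => ?_
  have hmap := S.map_apply e
  have ha := S.sa_mul_a_ne_zero e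
  have hb := S.sb_mul_b_ne_zero e
  split_ifs at hmap ⊢
  · exact ⟨hμ.le_of_hasLq1_map hp hq ha (fun z => congrArg Prod.fst (hmap z)) (hx _) (hx _),
      hμ.le_of_hasLq1_map hp hq hb (fun z => congrArg Prod.snd (hmap z)) (hy _) (hy _)⟩
  · exact ⟨hμ.le_of_hasLq1_map hp hq hb (fun z => congrArg Prod.snd (hmap z)) (hx _) (hy _),
      hμ.le_of_hasLq1_map hp hq ha (fun z => congrArg Prod.fst (hmap z)) (hy _) (hx _)⟩

end Splitting

section SingularValues

theorem wdims_append (w w' : List E) :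
    S.wdims (w ++ w') = S.wdims w * if S.wordDiag w then S.wdims w' else (S.wdims w').swap := by
  induction w with
  | nil => simp [wdims, wordDiag, Prod.ext_iff]
  | cons e w ih =>
    rw [List.cons_append, wdims, ih, wdims, wordDiag]
    cases S.diag e <;> cases S.wordDiag w <;> simp [Prod.ext_iff, mul_assoc]

theorem wdims_mem_Icc {m r : ℝ} (hm : 0 ≤ m) (h : ∀ e, S.a e ∈ Icc m r ∧ S.b e ∈ Icc m r)
    (w : List E) : (S.wdims w).1 ∈ Icc (m ^ w.length) (r ^ w.length) ∧
      (S.wdims w).2 ∈ Icc (m ^ w.length) (r ^ w.length) := by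
  induction w with
  | nil => simp [wdims]
  | cons e w ih =>
    have hmul : ∀ {c x : ℝ}, c ∈ Icc m r → x ∈ Icc (m ^ w.length) (r ^ w.length) →
        c * x ∈ Icc (m * m ^ w.length) (r * r ^ w.length) := fun hc hx =>
      have hm' := pow_nonneg hm w.length
      ⟨mul_le_mul hc.1 hx.1 hm' (hm.trans hc.1),
        mul_le_mul hc.2 hx.2 (hm'.trans hx.1) (hm.trans (hc.1.trans hc.2))⟩
    rw [wdims, List.length_cons, pow_succ', pow_succ']
    split_ifs
    · exact ⟨hmul (h e).1 ih.1, hmul (h e).2 ih.2⟩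
    · exact ⟨hmul (h e).1 ih.2, hmul (h e).2 ih.1⟩

theorem wdims_pos (w : List E) : 0 < (S.wdims w).1 ∧ 0 < (S.wdims w).2 := by
  induction w with
  | nil => simp [wdims]
  | cons e w ih =>
    have ha := (S.a_mem e).1
    have hb := (S.b_mem e).1
    rw [wdims]
    split_ifs
    · exact ⟨mul_pos ha ih.1, mul_pos hb ih.2⟩
    · exact ⟨mul_pos ha ih.2, mul_pos hb ih.1⟩

theorem wdims_le_one (w : List E) : (S.wdims w).1 ≤ 1 ∧ (S.wdims w).2 ≤ 1 := by
  have h := S.wdims_mem_Icc (r := 1) le_rfl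
    (fun e => ⟨Ioo_subset_Icc_self (S.a_mem e), Ioo_subset_Icc_self (S.b_mem e)⟩) w
  rw [one_pow] at h
  exact ⟨h.1.2, h.2.2⟩

theorem alpha2_pos (w : List E) : 0 < S.alpha2 w :=
  lt_min (S.wdims_pos w).1 (S.wdims_pos w).2

theorem alpha2_mem_Icc {m r : ℝ} (hm : 0 ≤ m) (h : ∀ e, S.a e ∈ Icc m r ∧ S.b e ∈ Icc m r)
    (w : List E) : S.alpha2 w ∈ Icc (m ^ w.length) (r ^ w.length) :=
  have hw := S.wdims_mem_Icc hm h w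
  ⟨le_min hw.1.1 hw.2.1, (min_le_left _ _).trans hw.1.2⟩

theorem alpha2_mul_le_append (w w' : List E) :
    S.alpha2 w * S.alpha2 w' ≤ S.alpha2 (w ++ w') := by
  obtain ⟨hc, hd⟩ := S.wdims_pos w
  have h' := (S.alpha2_pos w').le
  unfold alpha2 at *
  rw [wdims_append]
  split_ifs
  · exact le_min (mul_le_mul (min_le_left _ _) (min_le_left _ _) h' hc.le)
      (mul_le_mul (min_le_right _ _) (min_le_right _ _) h' hd.le)
  · exact le_min (mul_le_mul (min_le_left _ _) (min_le_right _ _) h' hc.le)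
      (mul_le_mul (min_le_right _ _) (min_le_left _ _) h' hd.le)

theorem alpha2_append_le (w w' : List E) : S.alpha2 (w ++ w') ≤ S.alpha2 w := by
  obtain ⟨hc, hd⟩ := S.wdims_pos w
  obtain ⟨hc', hd'⟩ := S.wdims_le_one w'
  unfold alpha2
  rw [wdims_append]
  split_ifs
  · exact min_le_min (mul_le_of_le_one_right hc.le hc') (mul_le_of_le_one_right hd.le hd')
  · exact min_le_min (mul_le_of_le_one_right hc.le hd') (mul_le_of_le_one_right hd.le hc')

end SingularValues

section Words

theorem wordProb_cons (h : E → ℝ) (e : E) (w : List E) :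
    wordProb h (e :: w) = h e * wordProb h w := by
  rw [wordProb, List.map_cons, List.prod_cons, wordProb]

theorem wordProb_append (h : E → ℝ) (w w' : List E) :
    wordProb h (w ++ w') = wordProb h w * wordProb h w' := by
  rw [wordProb, List.map_append, List.prod_append, wordProb, wordProb]

theorem wordProb_pos {h : E → ℝ} (hh : ∀ e, 0 < h e) (w : List E) : 0 < wordProb h w :=
  List.prod_pos (List.forall_mem_map.2 fun e _ => hh e)

theorem pow_length_le_wordProb {h : E → ℝ} {c : ℝ} (hc : 0 ≤ c) (hch : ∀ e, c ≤ h e) (w : List E) :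
    c ^ w.length ≤ wordProb h w := by
  induction w with
  | nil => simp [wordProb]
  | cons e w ih =>
    rw [List.length_cons, pow_succ', wordProb_cons]
    exact mul_le_mul (hch e) ih (pow_nonneg hc _) (hc.trans (hch e))

variable {S}

theorem admissible_append {w w' : List E} :
    S.Admissible (w ++ w') ↔ S.Admissible w ∧ S.Admissible w' ∧
      ∀ x ∈ w.getLast?, ∀ y ∈ w'.head?, S.term x = S.init y :=
  List.isChain_append

theorem admissible_cons_cons {e e' : E} {w : List E} :
    S.Admissible (e :: e' :: w) ↔ S.term e = S.init e' ∧ S.Admissible (e' :: w) :=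
  List.isChain_cons_cons

theorem wordTerm_cons_cons [Nonempty V] (e e' : E) (w : List E) :
    S.wordTerm (e :: e' :: w) = S.wordTerm (e' :: w) := by
  rw [wordTerm, List.getLast?_cons_cons, wordTerm]

theorem StronglyConnected.exists_admissible (hSC : S.StronglyConnected) (v v' : V) :
    ∃ z, S.Admissible z ∧ z ≠ [] ∧ (∀ e ∈ z.head?, S.init e = v) ∧
      ∀ e ∈ z.getLast?, S.term e = v' := by
  induction hSC v v' with
  | single h =>
    obtain ⟨e, rfl, rfl⟩ := h
    exact ⟨[e], List.isChain_singleton e, by simp, by simp, by simp⟩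
  | tail _ h ih =>
    obtain ⟨e, rfl, rfl⟩ := h
    obtain ⟨z, hz, hne, hinit, hterm⟩ := ih
    refine ⟨z ++ [e], admissible_append.2 ⟨hz, List.isChain_singleton e, fun x hx y hy => ?_⟩,
      by simp, by rwa [List.head?_append_of_ne_nil _ hne], by simp⟩
    obtain rfl : e = y := by simpa using hy
    exact hterm x hx

end Words

section ModifiedSingularValue

/-- The edge factor `p_e^q a_e^{τ_x} b_e^{τ_y}` of the modified singular value function, the
spectra being taken at the initial vertex of `e`. -/
noncomputable def edgeWeight (p : E → ℝ) (τx τy : V → ℝ) (q : ℝ) (e : E) : ℝ :=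
  p e ^ q * S.a e ^ τx (S.init e) * S.b e ^ τy (S.init e)

/-- The product of the multiplicative function of words with values `h` on edges (`wordProb`,
although `h` need not be a probability) and the power `r` of the smaller singular value. -/
noncomputable def wordWeight (h : E → ℝ) (r : ℝ) (w : List E) : ℝ :=
  wordProb h w * S.alpha2 w ^ r

variable {S} {p h : E → ℝ} {τx τy : V → ℝ} {t r : ℝ}

theorem edgeWeight_pos (hp : ∀ e, 0 < p e) (τx τy : V → ℝ) (q : ℝ) (e : E) :
    0 < S.edgeWeight p τx τy q e :=
  mul_pos (mul_pos (Real.rpow_pos_of_pos (hp e) _) (Real.rpow_pos_of_pos (S.a_mem e).1 _))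
    (Real.rpow_pos_of_pos (S.b_mem e).1 _)

theorem IsSplitting.wordTerm_eq [Nonempty V] (hτ : S.IsSplitting τx τy t) {e : E} {w : List E}
    (hw : S.Admissible (e :: w)) : (τx (S.wordTerm (e :: w)), τy (S.wordTerm (e :: w))) =
      if S.wordDiag (e :: w) then (τx (S.init e), τy (S.init e))
      else (τy (S.init e), τx (S.init e)) := by
  induction w generalizing e with
  | nil => simpa [wordDiag, wordTerm] using hτ.term_eq e
  | cons e' w ih =>
    obtain ⟨hee', hw'⟩ := admissible_cons_cons.1 hw
    have he := hτ.term_eq e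
    rw [hee'] at he
    have hdiag : S.wordDiag (e :: e' :: w) = (S.diag e == S.wordDiag (e' :: w)) := rfl
    rw [wordTerm_cons_cons, ih hw', hdiag]
    cases hd : S.diag e <;> cases hd' : S.wordDiag (e' :: w) <;> simp_all

theorem IsSplitting.wordTau_eq [Nonempty V] (hτ : S.IsSplitting τx τy t) {e : E} {w : List E}
    (hw : S.Admissible (e :: w)) : S.wordTau τx τy (e :: w) =
      if (S.wdims (e :: w)).2 ≤ (S.wdims (e :: w)).1 then τx (S.init e) else τy (S.init e) := by
  have hterm := hτ.wordTerm_eq hw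
  rw [wordTau]
  cases hd : S.wordDiag (e :: w) <;>
    by_cases hle : (S.wdims (e :: w)).2 ≤ (S.wdims (e :: w)).1 <;> simp_all

theorem IsSplitting.wordProb_edgeWeight (hτ : S.IsSplitting τx τy t) (hp : ∀ e, 0 < p e) (q : ℝ)
    {e : E} {w : List E} (hw : S.Admissible (e :: w)) :
    wordProb (S.edgeWeight p τx τy q) (e :: w) = wordProb p (e :: w) ^ q *
      ((S.wdims (e :: w)).1 ^ τx (S.init e) * (S.wdims (e :: w)).2 ^ τy (S.init e)) := by
  induction w generalizing e with
  | nil => simp [edgeWeight, wordProb, wdims, mul_assoc]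
  | cons e' w ih =>
    obtain ⟨hee', hw'⟩ := admissible_cons_cons.1 hw
    have he := hτ.term_eq e
    have ha := (S.a_mem e).1.le
    have hb := (S.b_mem e).1.le
    obtain ⟨hc, hd⟩ := S.wdims_pos (e' :: w)
    rw [hee'] at he
    have hdims : S.wdims (e :: e' :: w) =
        if S.diag e then (S.a e * (S.wdims (e' :: w)).1, S.b e * (S.wdims (e' :: w)).2)
        else (S.a e * (S.wdims (e' :: w)).2, S.b e * (S.wdims (e' :: w)).1) := rfl
    rw [wordProb_cons, ih hw', wordProb_cons p e (e' :: w),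
      Real.mul_rpow (hp e).le (wordProb_pos hp _).le, hdims, edgeWeight]
    split_ifs at he ⊢ <;> obtain ⟨hx, hy⟩ := Prod.mk.inj he <;> rw [hx, hy]
    · rw [Real.mul_rpow ha hc.le, Real.mul_rpow hb hd.le]
      ring
    · rw [Real.mul_rpow ha hd.le, Real.mul_rpow hb hc.le]
      ring

theorem IsSplitting.msvf_eq_wordWeight [Nonempty V] (hτ : S.IsSplitting τx τy t)
    (hp : ∀ e, 0 < p e) (s q : ℝ) {w : List E} (hw : S.Admissible w) :
    S.msvf p τx τy s q w = S.wordWeight (S.edgeWeight p τx τy q) (s - t) w := by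
  cases w with
  | nil => simp [msvf, wordWeight, wordProb, alpha1, alpha2, wdims]
  | cons e w =>
    obtain ⟨hc, hd⟩ := S.wdims_pos (e :: w)
    rw [msvf, wordWeight, hτ.wordTau_eq hw, hτ.wordProb_edgeWeight hp q hw, alpha1, alpha2,
      mul_assoc, max_rpow_mul_min_rpow hc hd, hτ.sum_eq, ← mul_assoc]

theorem wordWeight_pos (hh : ∀ e, 0 < h e) (r : ℝ) (w : List E) : 0 < S.wordWeight h r w :=
  mul_pos (wordProb_pos hh w) (Real.rpow_pos_of_pos (S.alpha2_pos w) _)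

theorem wordWeight_mul (h : E → ℝ) (r : ℝ) (w w' : List E) :
    S.wordWeight h r w * S.wordWeight h r w' =
      wordProb h (w ++ w') * (S.alpha2 w * S.alpha2 w') ^ r := by
  rw [wordWeight, wordWeight, wordProb_append, mul_mul_mul_comm,
    Real.mul_rpow (S.alpha2_pos w).le (S.alpha2_pos w').le]

theorem wordWeight_append_le (hh : ∀ e, 0 < h e) (hr : r ≤ 0) (w w' : List E) :
    S.wordWeight h r (w ++ w') ≤ S.wordWeight h r w * S.wordWeight h r w' := by
  rw [wordWeight_mul]
  exact mul_le_mul_of_nonneg_left (Real.rpow_le_rpow_of_nonpos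
    (mul_pos (S.alpha2_pos w) (S.alpha2_pos w')) (S.alpha2_mul_le_append w w') hr)
    (wordProb_pos hh _).le

theorem wordWeight_mul_le_append (hh : ∀ e, 0 < h e) (hr : 0 ≤ r) (w w' : List E) :
    S.wordWeight h r w * S.wordWeight h r w' ≤ S.wordWeight h r (w ++ w') := by
  rw [wordWeight_mul]
  exact mul_le_mul_of_nonneg_left (Real.rpow_le_rpow
    (mul_pos (S.alpha2_pos w) (S.alpha2_pos w')).le (S.alpha2_mul_le_append w w') hr)
    (wordProb_pos hh _).le

theorem wordWeight_append_le_mul_wordProb (hh : ∀ e, 0 < h e) (hr : 0 ≤ r) (w w' : List E) :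
    S.wordWeight h r (w ++ w') ≤ S.wordWeight h r w * wordProb h w' := by
  rw [wordWeight, wordWeight, wordProb_append, mul_right_comm]
  have hw := (wordProb_pos hh w).le
  have hw' := (wordProb_pos hh w').le
  have hα := (S.alpha2_pos (w ++ w')).le
  gcongr
  exact S.alpha2_append_le w w'

theorem wordWeight_add (h : E → ℝ) (r d : ℝ) (w : List E) :
    S.wordWeight h (r + d) w = S.alpha2 w ^ d * S.wordWeight h r w := by
  rw [wordWeight, wordWeight, Real.rpow_add (S.alpha2_pos w)]
  ring

end ModifiedSingularValue

section WordSum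

variable [Fintype E]

/-- The set `E^k` of admissible words of length `k`. -/
noncomputable def words (k : ℕ) : Finset (List E) :=
  (Finset.univ.image (List.ofFn : (Fin k → E) → List E)).filter S.Admissible

/-- The partition function of length `k`: the sum over `E^k` of `wordWeight h r`. -/
noncomputable def wordSum (h : E → ℝ) (r : ℝ) (k : ℕ) : ℝ :=
  ∑ w ∈ S.words k, S.wordWeight h r w

variable {S} {h p : E → ℝ} {τx τy : V → ℝ} {r t : ℝ} {k l : ℕ}

theorem mem_words {w : List E} : w ∈ S.words k ↔ w.length = k ∧ S.Admissible w := by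
  rw [words, Finset.mem_filter, Finset.mem_image]
  refine and_congr_left fun _ => ⟨?_, ?_⟩
  · rintro ⟨f, -, rfl⟩
    exact List.length_ofFn
  · rintro rfl
    exact ⟨w.get, Finset.mem_univ _, List.ofFn_get w⟩

theorem words_zero : S.words 0 = {[]} := by
  ext w
  rw [mem_words, List.length_eq_zero_iff, Finset.mem_singleton, and_iff_left_iff_imp]
  rintro rfl
  exact List.isChain_nil

variable (S) in
theorem exists_mem_words_init_eq (k : ℕ) (v : V) :
    ∃ w ∈ S.words k, ∀ e ∈ w.head?, S.init e = v := by
  induction k generalizing v with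
  | zero => exact ⟨[], by simp [words_zero], by simp⟩
  | succ k ih =>
    obtain ⟨e, he⟩ := S.edge_exists v
    obtain ⟨w, hw, hinit⟩ := ih (S.term e)
    obtain ⟨hlen, hadm⟩ := mem_words.1 hw
    exact ⟨e :: w, mem_words.2 ⟨by rw [List.length_cons, hlen],
      List.isChain_cons.2 ⟨fun e' he' => (hinit e' he').symm, hadm⟩⟩, by simpa using he⟩

variable (S) in
theorem words_nonempty [Nonempty V] (k : ℕ) : (S.words k).Nonempty :=
  have ⟨w, hw, _⟩ := S.exists_mem_words_init_eq k (Classical.arbitrary V)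
  ⟨w, hw⟩

theorem wordSum_pos [Nonempty V] (hh : ∀ e, 0 < h e) (r : ℝ) (k : ℕ) : 0 < S.wordSum h r k :=
  Finset.sum_pos (fun w _ => wordWeight_pos hh r w) (S.words_nonempty k)

theorem IsSplitting.Amat_eq_sum_wordWeight [Nonempty V] (hτ : S.IsSplitting τx τy t)
    (hp : ∀ e, 0 < p e) (s q : ℝ) (k : ℕ) (v v' : V) :
    S.Amat p τx τy s q k v v' =
      ∑ w ∈ S.words k with (S.wordInit w, S.wordTerm w) = (v, v'),
        S.wordWeight (S.edgeWeight p τx τy q) (s - t) w := by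
  rw [Amat, words, Finset.filter_filter, Finset.sum_filter,
    Finset.sum_image List.ofFn_injective.injOn]
  refine Finset.sum_congr rfl fun f _ => ?_
  simp only [Prod.mk.injEq]
  split_ifs with hf
  · exact hτ.msvf_eq_wordWeight hp s q hf.1
  · rfl

theorem IsSplitting.mnorm_Amat [Fintype V] [Nonempty V] (hτ : S.IsSplitting τx τy t)
    (hp : ∀ e, 0 < p e) (s q : ℝ) (k : ℕ) :
    mnorm (S.Amat p τx τy s q k) = S.wordSum (S.edgeWeight p τx τy q) (s - t) k := by
  have habs : ∀ v v', |S.Amat p τx τy s q k v v'| = S.Amat p τx τy s q k v v' := fun v v' => by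
    rw [abs_eq_self, hτ.Amat_eq_sum_wordWeight hp]
    exact Finset.sum_nonneg fun w _ => (wordWeight_pos (S.edgeWeight_pos hp τx τy q) _ w).le
  calc mnorm (S.Amat p τx τy s q k) = ∑ x : V × V, S.Amat p τx τy s q k x.1 x.2 := by
        simp only [mnorm, habs, Fintype.sum_prod_type]
    _ = S.wordSum (S.edgeWeight p τx τy q) (s - t) k := by
        simp only [hτ.Amat_eq_sum_wordWeight hp, Prod.mk.eta]
        exact Finset.sum_fiberwise _ (fun w => (S.wordInit w, S.wordTerm w)) _

variable (S) in
theorem sum_words_add_le {f g F : List E → ℝ} (hf : ∀ w, 0 ≤ f w) (hg : ∀ w, 0 ≤ g w)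
    (hF : ∀ w w', F (w ++ w') ≤ f w * g w') (k l : ℕ) :
    ∑ w ∈ S.words (k + l), F w ≤ (∑ w ∈ S.words k, f w) * ∑ w ∈ S.words l, g w := by
  rw [Finset.sum_mul_sum, ← Finset.sum_product']
  refine sum_le_sum_of_injOn (fun w => (w.take k, w.drop k)) (fun w hw => ?_)
    (fun w _ w' _ heq => ?_) (fun w _ => ?_) fun _ _ => mul_nonneg (hf _) (hg _)
  · obtain ⟨hlen, hadm⟩ := mem_words.1 hw
    rw [← List.take_append_drop k w, admissible_append] at hadm
    exact Finset.mem_product.2 ⟨mem_words.2 ⟨by simp [hlen], hadm.1⟩,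
      mem_words.2 ⟨by simp [hlen], hadm.2.1⟩⟩
  · obtain ⟨htake, hdrop⟩ := Prod.mk.inj heq
    rw [← List.take_append_drop k w, htake, hdrop, List.take_append_drop]
  · simpa only [List.take_append_drop] using hF (w.take k) (w.drop k)

theorem wordSum_add_le (hh : ∀ e, 0 < h e) (hr : r ≤ 0) (k l : ℕ) :
    S.wordSum h r (k + l) ≤ S.wordSum h r k * S.wordSum h r l :=
  S.sum_words_add_le (fun w => (wordWeight_pos hh r w).le) (fun w => (wordWeight_pos hh r w).le)
    (wordWeight_append_le hh hr) k l

theorem wordSum_add_le_mul_sum_wordProb (hh : ∀ e, 0 < h e) (hr : 0 ≤ r) (k l : ℕ) :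
    S.wordSum h r (k + l) ≤ S.wordSum h r k * ∑ w ∈ S.words l, wordProb h w :=
  S.sum_words_add_le (fun w => (wordWeight_pos hh r w).le) (fun w => (wordProb_pos hh w).le)
    (wordWeight_append_le_mul_wordProb hh hr) k l

theorem sum_wordProb_pos [Nonempty V] (hh : ∀ e, 0 < h e) (k : ℕ) :
    0 < ∑ w ∈ S.words k, wordProb h w :=
  Finset.sum_pos (fun w _ => wordProb_pos hh w) (S.words_nonempty k)

theorem exists_pow_le_wordSum [Nonempty V] (hh : ∀ e, 0 < h e) (hr : r ≤ 0) :
    ∃ c, 0 < c ∧ ∀ k, c ^ k ≤ S.wordSum h r k := by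
  have := S.nonempty_edge
  obtain ⟨e, he⟩ := Finite.exists_min h
  refine ⟨h e, hh e, fun k => ?_⟩
  obtain ⟨w, hw⟩ := S.words_nonempty k
  have hα : S.alpha2 w ≤ 1 := (min_le_left _ _).trans (S.wdims_le_one w).1
  calc h e ^ k = h e ^ w.length := by rw [(mem_words.1 hw).1]
    _ ≤ wordProb h w := pow_length_le_wordProb (hh e).le he w
    _ ≤ S.wordWeight h r w := le_mul_of_one_le_right (wordProb_pos hh w).le
      (Real.one_le_rpow_of_pos_of_le_one_of_nonpos (S.alpha2_pos w) hα hr)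
    _ ≤ S.wordSum h r k := Finset.single_le_sum (fun w _ => (wordWeight_pos hh r w).le) hw

theorem exists_wordSum_le_pow [Nonempty V] (hh : ∀ e, 0 < h e) (hr : 0 ≤ r) :
    ∃ C, 0 < C ∧ ∀ k, S.wordSum h r k ≤ C ^ k := by
  have hC := S.sum_wordProb_pos hh 1
  refine ⟨_, hC, fun k => ?_⟩
  induction k with
  | zero => simp [wordSum, words_zero, wordWeight, wordProb, alpha2, wdims]
  | succ k ih =>
    rw [pow_succ]
    exact (wordSum_add_le_mul_sum_wordProb hh hr k 1).trans (mul_le_mul_of_nonneg_right ih hC.le)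

section Connecting

variable [Nonempty V] {z : V → V → List E}

theorem append_connecting_mem_words (hz : ∀ v v', S.Admissible (z v v')) (hne : ∀ v v', z v v' ≠ [])
    (hinit : ∀ v v', ∀ e ∈ (z v v').head?, S.init e = v)
    (hterm : ∀ v v', ∀ e ∈ (z v v').getLast?, S.term e = v') {w w' : List E}
    (hw : w ∈ S.words k) (hw' : w' ∈ S.words l) :
    w ++ (z (S.wordTerm w) (S.wordInit w') ++ w') ∈
      S.words (k + l + (z (S.wordTerm w) (S.wordInit w')).length) := by
  obtain ⟨rfl, hadm⟩ := mem_words.1 hw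
  obtain ⟨rfl, hadm'⟩ := mem_words.1 hw'
  refine mem_words.2 ⟨by simp only [List.length_append]; ring, admissible_append.2 ⟨hadm,
    admissible_append.2 ⟨hz _ _, hadm', fun x hx y hy => ?_⟩, fun x hx y hy => ?_⟩⟩
  · rw [hterm _ _ x hx, wordInit, Option.mem_def.1 hy]
    rfl
  · rw [List.head?_append_of_ne_nil _ (hne _ _)] at hy
    rw [hinit _ _ y hy, wordTerm, Option.mem_def.1 hx]
    rfl

theorem injOn_append_connecting : InjOn
    (fun x : List E × List E => x.1 ++ (z (S.wordTerm x.1) (S.wordInit x.2) ++ x.2))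
    (S.words k ×ˢ S.words l : Finset (List E × List E)) := by
  rintro ⟨w₁, w₁'⟩ h₁ ⟨w₂, w₂'⟩ h₂ heq
  obtain ⟨hw₁, hw₁'⟩ := Finset.mem_product.1 h₁
  obtain ⟨hw₂, hw₂'⟩ := Finset.mem_product.1 h₂
  obtain ⟨hpre, hrest⟩ := List.append_inj heq
    ((mem_words.1 hw₁).1.trans (mem_words.1 hw₂).1.symm)
  exact Prod.ext hpre
    (List.append_inj' hrest ((mem_words.1 hw₁').1.trans (mem_words.1 hw₂').1.symm)).2

end Connecting

theorem pairwiseDisjoint_words (n : ℕ) (s : Set ℕ) :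
    s.PairwiseDisjoint fun j => S.words (n + j) := fun _ _ _ _ hij =>
  Finset.disjoint_left.2 fun _ hi hj =>
    hij (Nat.add_left_cancel ((mem_words.1 hi).1.symm.trans (mem_words.1 hj).1))

theorem StronglyConnected.exists_mul_wordSum_le_sum [Finite V] [Nonempty V]
    (hSC : S.StronglyConnected) (hh : ∀ e, 0 < h e) (hr : 0 ≤ r) :
    ∃ κ, 0 < κ ∧ ∃ n, ∀ k l, κ * (S.wordSum h r k * S.wordSum h r l) ≤
      ∑ j ∈ Finset.range (n + 1), S.wordSum h r (k + l + j) := by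
  choose z hz hne hinit hterm using hSC.exists_admissible
  obtain ⟨x, hx⟩ := Finite.exists_min fun x : V × V => S.wordWeight h r (z x.1 x.2)
  obtain ⟨y, hy⟩ := Finite.exists_max fun x : V × V => (z x.1 x.2).length
  have hpos : ∀ w, 0 < S.wordWeight h r w := wordWeight_pos hh r
  refine ⟨_, hpos (z x.1 x.2), (z y.1 y.2).length, fun k l => ?_⟩
  unfold wordSum
  rw [← Finset.sum_biUnion (pairwiseDisjoint_words (k + l) _), Finset.sum_mul_sum,
    ← Finset.sum_product', Finset.mul_sum]
  refine sum_le_sum_of_injOn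
    (fun x => x.1 ++ (z (S.wordTerm x.1) (S.wordInit x.2) ++ x.2)) ?_
    injOn_append_connecting ?_ fun w _ => (hpos w).le
  · rintro ⟨w, w'⟩ hww'
    obtain ⟨hw, hw'⟩ := Finset.mem_product.1 hww'
    exact Finset.mem_biUnion.2 ⟨_, Finset.mem_range.2 (Nat.lt_succ_of_le (hy (_, _))),
      append_connecting_mem_words hz hne hinit hterm hw hw'⟩
  · rintro ⟨w, w'⟩ -
    set u := z (S.wordTerm w) (S.wordInit w')
    calc S.wordWeight h r (z x.1 x.2) * (S.wordWeight h r w * S.wordWeight h r w')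
        ≤ S.wordWeight h r u * (S.wordWeight h r w * S.wordWeight h r w') :=
          mul_le_mul_of_nonneg_right (hx (_, _)) (mul_pos (hpos w) (hpos w')).le
      _ = S.wordWeight h r w * (S.wordWeight h r u * S.wordWeight h r w') := by ring
      _ ≤ S.wordWeight h r w * S.wordWeight h r (u ++ w') :=
          mul_le_mul_of_nonneg_left (wordWeight_mul_le_append hh hr u w') (hpos w).le
      _ ≤ S.wordWeight h r (w ++ (u ++ w')) := wordWeight_mul_le_append hh hr w _

theorem StronglyConnected.exists_mul_wordSum_le [Finite V] [Nonempty V]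
    (hSC : S.StronglyConnected) (hh : ∀ e, 0 < h e) (hr : 0 ≤ r) :
    ∃ c, 0 < c ∧ ∀ k l, c * (S.wordSum h r k * S.wordSum h r l) ≤ S.wordSum h r (k + l) := by
  obtain ⟨κ, hκ, n, hκn⟩ := hSC.exists_mul_wordSum_le_sum hh hr
  set H := ∑ j ∈ Finset.range (n + 1), ∑ w ∈ S.words j, wordProb h w
  have hH : 0 < H := Finset.sum_pos (fun j _ => sum_wordProb_pos hh j) ⟨0, by simp⟩
  refine ⟨κ / H, div_pos hκ hH, fun k l => ?_⟩
  rw [div_mul_eq_mul_div, div_le_iff₀ hH, Finset.mul_sum]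
  exact (hκn k l).trans
    (Finset.sum_le_sum fun j _ => wordSum_add_le_mul_sum_wordProb hh hr (k + l) j)

end WordSum

section Pressure

variable [Fintype E] {h : E → ℝ}

/-- The exponential growth rate in `k` of the sum of `wordWeight h r` over `E^k`; up to the shift
of `r` by the sum `t(q)` of the two spectra, this is the logarithm of the pressure. -/
noncomputable def logPressure (h : E → ℝ) (r : ℝ) : ℝ :=
  limUnder atTop fun k : ℕ => Real.log (S.wordSum h r k) / k

variable {S}

theorem StronglyConnected.tendsto_logPressure [Finite V] [Nonempty V] (hSC : S.StronglyConnected)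
    (hh : ∀ e, 0 < h e) (r : ℝ) :
    Tendsto (fun k : ℕ => Real.log (S.wordSum h r k) / k) atTop (𝓝 (S.logPressure h r)) := by
  refine tendsto_nhds_limUnder ?_
  rcases le_total r 0 with hr | hr
  · obtain ⟨c, hc, hlow⟩ := S.exists_pow_le_wordSum hh hr
    exact exists_tendsto_log_div_of_le_mul hc one_pos hlow fun k l => by
      rw [one_mul]
      exact wordSum_add_le hh hr k l
  · obtain ⟨C, hC, hup⟩ := S.exists_wordSum_le_pow hh hr
    obtain ⟨c, hc, hmul⟩ := hSC.exists_mul_wordSum_le hh hr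
    exact exists_tendsto_log_div_of_mul_le hc hC (wordSum_pos hh r) hup hmul

theorem pow_mul_wordSum_le {m d : ℝ} (hm : 0 ≤ m) (hab : ∀ e, m ≤ S.a e ∧ m ≤ S.b e)
    (hh : ∀ e, 0 < h e) (hd : 0 ≤ d) (r : ℝ) (k : ℕ) :
    (m ^ d) ^ k * S.wordSum h r k ≤ S.wordSum h (r + d) k := by
  rw [wordSum, wordSum, Finset.mul_sum]
  refine Finset.sum_le_sum fun w hw => ?_
  obtain ⟨rfl, -⟩ := mem_words.1 hw
  have hα : m ^ w.length ≤ S.alpha2 w := (S.alpha2_mem_Icc hm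
    (fun e => ⟨⟨(hab e).1, (S.a_mem e).2.le⟩, (hab e).2, (S.b_mem e).2.le⟩) w).1
  rw [wordWeight_add, Real.rpow_pow_comm hm]
  exact mul_le_mul_of_nonneg_right (Real.rpow_le_rpow (pow_nonneg hm _) hα hd)
    (wordWeight_pos hh r w).le

theorem wordSum_le_pow_mul {ρ d : ℝ} (hρ : 0 ≤ ρ) (hab : ∀ e, S.a e ≤ ρ ∧ S.b e ≤ ρ)
    (hh : ∀ e, 0 < h e) (hd : 0 ≤ d) (r : ℝ) (k : ℕ) :
    S.wordSum h (r + d) k ≤ (ρ ^ d) ^ k * S.wordSum h r k := by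
  rw [wordSum, wordSum, Finset.mul_sum]
  refine Finset.sum_le_sum fun w hw => ?_
  obtain ⟨rfl, -⟩ := mem_words.1 hw
  have hα : S.alpha2 w ≤ ρ ^ w.length := (S.alpha2_mem_Icc le_rfl
    (fun e => ⟨⟨(S.a_mem e).1.le, (hab e).1⟩, (S.b_mem e).1.le, (hab e).2⟩) w).2
  rw [wordWeight_add, Real.rpow_pow_comm hρ]
  exact mul_le_mul_of_nonneg_right (Real.rpow_le_rpow (S.alpha2_pos w).le hα hd)
    (wordWeight_pos hh r w).le

theorem StronglyConnected.exists_monotone_antitone_logPressure_add_mul [Finite V] [Nonempty V]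
    (hSC : S.StronglyConnected) (hh : ∀ e, 0 < h e) :
    ∃ A B : ℝ, 0 < B ∧ (Monotone fun r => S.logPressure h r + A * r) ∧
      Antitone fun r => S.logPressure h r + B * r := by
  have := S.nonempty_edge
  obtain ⟨m, hm, ρ, hρ, hab⟩ := S.exists_ratio_bounds
  have hlim := hSC.tendsto_logPressure hh
  refine ⟨-Real.log m, -Real.log ρ, neg_pos.2 (Real.log_neg hρ.1 hρ.2), fun r r' hr => ?_,
    fun r r' hr => ?_⟩ <;> obtain ⟨d, hd, rfl⟩ := exists_nonneg_add_of_le hr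
  · have hlow := log_add_le_of_tendsto_log_div (Real.rpow_pos_of_pos hm.1 d) (wordSum_pos hh r)
      (pow_mul_wordSum_le hm.1.le (fun e => ⟨(hab e).1.1, (hab e).2.1⟩) hh hd r) (hlim r)
      (hlim (r + d))
    rw [Real.log_rpow hm.1] at hlow
    linarith
  · have hpow := Real.rpow_pos_of_pos hρ.1 d
    have hup := log_add_le_of_tendsto_log_div (inv_pos.2 hpow) (wordSum_pos hh (r + d))
      (fun k => by
        rw [inv_pow, inv_mul_le_iff₀ (pow_pos hpow k)]
        exact wordSum_le_pow_mul hρ.1.le (fun e => ⟨(hab e).1.2, (hab e).2.2⟩) hh hd r k)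
      (hlim (r + d)) (hlim r)
    rw [Real.log_inv, Real.log_rpow hρ.1] at hup
    linarith

theorem StronglyConnected.strictAnti_logPressure [Finite V] [Nonempty V]
    (hSC : S.StronglyConnected) (hh : ∀ e, 0 < h e) : StrictAnti (S.logPressure h) :=
  have ⟨_, _, hB, _, hanti⟩ := hSC.exists_monotone_antitone_logPressure_add_mul hh
  strictAnti_of_antitone_add_mul hB hanti

theorem StronglyConnected.bijective_logPressure [Finite V] [Nonempty V]
    (hSC : S.StronglyConnected) (hh : ∀ e, 0 < h e) : Function.Bijective (S.logPressure h) :=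
  have ⟨_, _, hB, hmono, hanti⟩ := hSC.exists_monotone_antitone_logPressure_add_mul hh
  bijective_of_monotone_of_antitone_add_mul hB hmono hanti

theorem IsSplitting.tendsto_mnorm_Amat [Fintype V] [Nonempty V] {p : E → ℝ} {τx τy : V → ℝ}
    {t : ℝ} (hτ : S.IsSplitting τx τy t) (hSC : S.StronglyConnected) (hp : ∀ e, 0 < p e)
    (s q : ℝ) : Tendsto (fun k : ℕ => mnorm (S.Amat p τx τy s q k) ^ ((k : ℝ)⁻¹)) atTop
      (𝓝 (Real.exp (S.logPressure (S.edgeWeight p τx τy q) (s - t)))) := by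
  have hh := S.edgeWeight_pos hp τx τy q
  refine ((Real.continuous_exp.tendsto _).comp (hSC.tendsto_logPressure hh (s - t))).congr
    fun k => ?_
  rw [hτ.mnorm_Amat hp, Real.rpow_def_of_pos (wordSum_pos hh _ k), Function.comp_apply,
    div_eq_mul_inv]

theorem IsSplitting.exists_pressure [Fintype V] [Nonempty V] {p : E → ℝ} {τx τy : V → ℝ} {t : ℝ}
    (hτ : S.IsSplitting τx τy t) (hSC : S.StronglyConnected) (hp : ∀ e, 0 < p e) (q : ℝ) :
    ∃ P : ℝ → ℝ, (∀ s, Tendsto (fun k : ℕ => mnorm (S.Amat p τx τy s q k) ^ ((k : ℝ)⁻¹)) atTop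
      (𝓝 (P s))) ∧ StrictAnti P ∧ ∃! s, P s = 1 := by
  have hh := S.edgeWeight_pos hp τx τy q
  obtain ⟨r, hr, huniq⟩ := (hSC.bijective_logPressure hh).existsUnique 0
  refine ⟨_, fun s => hτ.tendsto_mnorm_Amat hSC hp s q, fun s s' hs =>
    Real.exp_lt_exp.2 (hSC.strictAnti_logPressure hh (sub_lt_sub_right hs t)), r + t, ?_,
    fun s hs => ?_⟩
  · simp [hr]
  · rw [← huniq (s - t) ((Real.exp_eq_one_iff _).1 hs), sub_add_cancel]

end Pressure

end BoxLikeGIFS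

end LqGIFS

/-- the pressure function.  For every `s ∈ ℝ` and `q ≥ 0` the limit
`P(s,q) = lim_k ‖A_k^{s,q}‖^{1/k}` exists; moreover for each fixed `q ≥ 0` the function
`s ↦ P(s,q)` is strictly decreasing and there is a unique `s` with `P(s,q) = 1`. -/
theorem statement16
    {V E : Type} [Fintype V] [Fintype E] [Nonempty V]
    (S : BoxLikeGIFS V E) (hSC : S.StronglyConnected)
    (p : E → ℝ) (hp : S.IsWeights p)
    (μ : V → Measure (ℝ × ℝ)) (hμ : S.IsGDMeasure p μ)
    (τx τy : V → ℝ → ℝ)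
    (hτx : ∀ q : ℝ, 0 ≤ q → ∀ v : V, HasLq1 ((μ v).map Prod.fst) q (τx v q))
    (hτy : ∀ q : ℝ, 0 ≤ q → ∀ v : V, HasLq1 ((μ v).map Prod.snd) q (τy v q)) :
    ∃ P : ℝ → ℝ → ℝ,
      (∀ q : ℝ, 0 ≤ q → ∀ s : ℝ,
        Tendsto
          (fun k : ℕ =>
            (mnorm (S.Amat p (fun v => τx v q) (fun v => τy v q) s q k)) ^ ((k : ℝ)⁻¹))
          atTop (nhds (P s q))) ∧
      (∀ q : ℝ, 0 ≤ q → StrictAnti (fun s : ℝ => P s q)) ∧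
      (∀ q : ℝ, 0 ≤ q → ∃! s : ℝ, P s q = 1) := by
  have h : ∀ q : ℝ, 0 ≤ q → ∃ P : ℝ → ℝ, (∀ s, Tendsto
      (fun k : ℕ => mnorm (S.Amat p (fun v => τx v q) (fun v => τy v q) s q k) ^ ((k : ℝ)⁻¹))
      atTop (nhds (P s))) ∧ StrictAnti P ∧ ∃! s, P s = 1 := fun q hq => by
    obtain ⟨t, ht⟩ := hμ.exists_isSplitting hp hSC hq (hτx q hq) (hτy q hq)
    exact ht.exists_pressure hSC hp.1 q
  choose! P hP using h
  exact ⟨fun s q => P q s, fun q hq => (hP q hq).1, fun q hq => (hP q hq).2.1,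
    fun q hq => (hP q hq).2.2⟩
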